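/- (Lemma 2.3, trilinear estimate.) Let α ∈ [0,1/2). There is a constant C = C(α) such that: if f = f(t,·) is Schwartz in x for each t ≥ 1 and satisfies sup_{t≥1}( t^{-1/6}‖x f(t)‖_{L²} + ‖f̂(t,·)‖_{L^∞} ) ≤ ε₁, then u(t,x) = (2π)^{-1/2}∫_ℝ e^{i(xξ+tξ³)} f̂(t,ξ) dξ satisfies ‖ |∂_x|^α ( u(t)³ ) ‖_{L²(ℝ)} ≤ C ε₁³ t^{-5/6-α/3} for all t ≥ 1. -/

import Mathlib

/-!
The estimate is scale invariant. With `l = t^{-1/3}` and `H(η) = ĝ(l η)`, the evolution at time `t`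
is `u(t,x) = c l U(l x)`, where `U(x) = ∫ e^{i(xξ+ξ³)} H(ξ) dξ` is an evolution at time one
(`uAiry_scale`). The hypotheses become `‖H‖_∞ ≤ ε` and `‖H'‖_{L²} ≤ ε` (`profile_sup`,
`profile_deriv`), and the powers of `l` gained from `FT_scale` and `L2_scale` add up to
`t^{-5/6-α/3}`. It remains to bound `|∂|^α (U³)` in `L²`.

Pointwise bounds. Write `φ'(ξ) = 3ξ² + x` for the phase derivative and `r = ⟨x⟩^{1/4}`. Instead of
cutting out the stationary points, integrate by parts with the smooth multiplier
`φ' / (φ'² + r²)`. All resulting error terms are controlled by the weight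
`(r⁴ + ξ²) / (φ'² + r²)`, whose integral is `O(r)` (`wt_integrable`). Using the sup bound on `H`
and Cauchy-Schwarz for `H'`, this gives `|U| ≲ ε/r` (`osc_le`), and with an additional factor `ξ`,
`|U'| ≲ ε r` (`deriv_osc_le`). Hence `F = U³` satisfies `|F|² ≲ ε⁶ ⟨x⟩^{-3/2}` and
`|F'|² ≲ ε⁶ ⟨x⟩^{-1/2}` (`cube_bounds`).

Fractional derivative. For `0 < s ≤ 1` these two bounds give
`‖F(·+s) - F‖² ≲ ε⁶ ∫ min(⟨x⟩^{-3/2}, s² ⟨x⟩^{-1/2}) dx ≲ ε⁶ s` (`incr_bound`). By Plancherel and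
`|k|^{2α} ≲ 1 + ∫₀¹ |e^{iks}-1|² s^{-1-2α} ds` (`kernel_lower`),
`‖|∂|^α F‖² ≲ ‖F‖² + ∫₀¹ s^{-1-2α} ‖F(·+s) - F‖² ds ≲ ε⁶ (1 + ∫₀¹ s^{-2α} ds)`,
which is finite exactly because `α < 1/2` (`sobolev`).
-/

noncomputable section

open MeasureTheory Real Complex

/-- Fourier transform: ĝ(ξ) = (2π)^{-1/2} ∫ e^{-ixξ} g(x) dx. -/
def FT (g : ℝ → ℂ) (ξ : ℝ) : ℂ :=
  (Real.sqrt (2 * Real.pi) : ℂ)⁻¹ * ∫ x : ℝ, Complex.exp (-(Complex.I * x * ξ)) * g x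

/-- L² norm. -/
def L2norm (g : ℝ → ℂ) : ℝ := Real.sqrt (∫ x : ℝ, ‖g x‖ ^ 2)

/-- L^p norm for a real exponent p. -/
def LpNorm (p : ℝ) (g : ℝ → ℂ) : ℝ := (∫ x : ℝ, ‖g x‖ ^ p) ^ (1/p)

/-- L^∞ norm (as a pointwise supremum). -/
def LinfNorm (g : ℝ → ℂ) : ℝ := ⨆ x : ℝ, ‖g x‖

/-- The free Airy evolution `u(t,x) = (e^{-t∂ₓ³} f)(x) = (2π)^{-1/2} ∫ e^{i(xξ+tξ³)} f̂(ξ) dξ`. -/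
def uAiry (g : ℝ → ℂ) (t x : ℝ) : ℂ :=
  (Real.sqrt (2 * Real.pi) : ℂ)⁻¹ *
    ∫ ξ : ℝ, Complex.exp (Complex.I * (x * ξ + t * ξ ^ 3)) * FT g ξ

/-- The free Airy evolution with a fractional derivative:
`(|∂ₓ|^β e^{-t∂ₓ³} f)(x) = (2π)^{-1/2} ∫ e^{i(xξ+tξ³)} |ξ|^β f̂(ξ) dξ`. -/
def fracAiry (g : ℝ → ℂ) (t β x : ℝ) : ℂ :=
  (Real.sqrt (2 * Real.pi) : ℂ)⁻¹ *
    ∫ ξ : ℝ, Complex.exp (Complex.I * (x * ξ + t * ξ ^ 3)) * ((|ξ| ^ β : ℝ) : ℂ) * FT g ξ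

/-- `(∂ₓ e^{-t∂ₓ³} f)(x) = (2π)^{-1/2} ∫ e^{i(xξ+tξ³)} (iξ) f̂(ξ) dξ`. -/
def derivAiry (g : ℝ → ℂ) (t x : ℝ) : ℂ :=
  (Real.sqrt (2 * Real.pi) : ℂ)⁻¹ *
    ∫ ξ : ℝ, Complex.exp (Complex.I * (x * ξ + t * ξ ^ 3)) * (Complex.I * ξ) * FT g ξ

open scoped FourierTransform SchwartzMap

/-! ### Dilations and the Fourier transform of Schwartz functions -/

/-- The dilation `x ↦ f (a x)` of a Schwartz function, `a ≠ 0`. -/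
def dil (a : ℝ) (ha : a ≠ 0) (f : 𝓢(ℝ, ℂ)) : 𝓢(ℝ, ℂ) :=
  SchwartzMap.compCLMOfContinuousLinearEquiv ℂ
    (ContinuousLinearEquiv.unitsEquivAut ℝ (Units.mk0 a ha)) f

lemma dil_apply (a : ℝ) (ha : a ≠ 0) (f : 𝓢(ℝ, ℂ)) (x : ℝ) : dil a ha f x = f (a * x) := by
  simp [dil, mul_comm]

lemma FT_eq (g : ℝ → ℂ) (ξ : ℝ) :
    FT g ξ = (Real.sqrt (2 * Real.pi) : ℂ)⁻¹ * 𝓕 g ((2 * π)⁻¹ * ξ) := by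
  rw [FT, Real.fourier_real_eq_integral_exp_smul]
  congr 2
  ext x
  rw [smul_eq_mul]
  congr 2
  push_cast
  have : (π : ℂ) ≠ 0 := by exact_mod_cast Real.pi_ne_zero
  field_simp

/-- The Fourier transform of a Schwartz function, in the unitary normalisation, as a
Schwartz function. -/
def FTS (f : 𝓢(ℝ, ℂ)) : 𝓢(ℝ, ℂ) :=
  (Real.sqrt (2 * Real.pi) : ℂ)⁻¹ • dil (2 * π)⁻¹ (by positivity) (𝓕 f)

lemma FTS_apply (f : 𝓢(ℝ, ℂ)) (ξ : ℝ) : FTS f ξ = FT f ξ := by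
  rw [FT_eq, FTS, _root_.smul_apply, dil_apply, SchwartzMap.fourier_coe, smul_eq_mul]

lemma plancherel (f : 𝓢(ℝ, ℂ)) : ∫ ξ, ‖FT f ξ‖ ^ 2 = ∫ x, ‖f x‖ ^ 2 := by
  rw [← SchwartzMap.integral_norm_sq_fourier f]
  simp_rw [FT_eq, norm_mul, mul_pow]
  rw [integral_const_mul, ← SchwartzMap.fourier_coe]
  rw [Measure.integral_comp_mul_left (fun ξ => ‖(𝓕 f : 𝓢(ℝ, ℂ)) ξ‖ ^ 2)]
  simp only [norm_inv, Complex.norm_real, inv_inv, smul_eq_mul, Real.norm_eq_abs]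
  rw [inv_pow, sq_abs, Real.sq_sqrt (by positivity), abs_of_pos (by positivity)]
  field_simp

lemma deriv_FTS (f : 𝓢(ℝ, ℂ)) :
    ∫ ξ, ‖deriv (FTS f) ξ‖ ^ 2 = ∫ x : ℝ, ‖(x : ℂ) * f x‖ ^ 2 := by
  have tg : Function.HasTemperateGrowth (fun x : ℝ => (x : ℂ)) :=
    Function.Complex.hasTemperateGrowth_ofReal
  set xf : 𝓢(ℝ, ℂ) := SchwartzMap.smulLeftCLM ℂ (fun x : ℝ => (x : ℂ)) f with hxf
  have hx : ∀ x, xf x = (x : ℂ) * f x := fun x => by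
    rw [hxf, SchwartzMap.smulLeftCLM_apply_apply tg, smul_eq_mul]
  have h1 : ∀ ξ, deriv (FTS f) ξ = -Complex.I * FT xf ξ := by
    intro ξ
    have e : (FTS f : ℝ → ℂ) = fun ξ => (Real.sqrt (2 * Real.pi) : ℂ)⁻¹ *
        𝓕 (f : ℝ → ℂ) ((2 * π)⁻¹ * ξ) := by
      ext ξ; rw [FTS_apply, FT_eq]
    have hd := Real.hasDerivAt_fourier (f := (f : ℝ → ℂ)) f.integrable (by
      have := xf.integrable (μ := volume)
      refine this.congr (Filter.Eventually.of_forall fun x => ?_)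
      simp [hx]) ((2 * π)⁻¹ * ξ)
    have hd2 := (HasDerivAt.scomp ξ hd ((hasDerivAt_id ξ).const_mul (2 * π)⁻¹)).const_mul
      (Real.sqrt (2 * Real.pi) : ℂ)⁻¹
    rw [e]
    have e2 : (fun x : ℝ => (-2 * π * Complex.I * x) • f x) =
        fun x => (-2 * π * Complex.I) • xf x := by
      ext x; simp [hx]; ring
    erw [hd2.deriv]
    rw [FT_eq, e2]
    have e3 : 𝓕 (fun x : ℝ => (-2 * π * Complex.I) • xf x) =
      (-2 * π * Complex.I) • 𝓕 (xf : ℝ → ℂ) := by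
      ext y
      rw [Pi.smul_apply, Real.fourier_real_eq, Real.fourier_real_eq, ← integral_smul]
      congr 1; ext v
      rw [smul_comm]
    rw [e3]
    simp only [Pi.smul_apply, Complex.real_smul, smul_eq_mul]
    have : (π : ℂ) ≠ 0 := by exact_mod_cast Real.pi_ne_zero
    push_cast
    field_simp
  simp_rw [h1, norm_mul, norm_neg, Complex.norm_I, one_mul]
  rw [plancherel]
  simp_rw [hx, norm_mul]

/-! ### The time-one Airy evolution -/

lemma expI_growth : Function.HasTemperateGrowth (fun y : ℝ => Complex.exp (Complex.I * y)) := by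
  refine ⟨(contDiff_const.mul Complex.ofRealCLM.contDiff).cexp, fun n => ⟨0, 1, fun x => ?_⟩⟩
  rw [norm_iteratedFDeriv_eq_norm_iteratedDeriv]
  have : iteratedDeriv n (fun y : ℝ => Complex.exp (Complex.I * y)) =
      fun y : ℝ => Complex.I ^ n * Complex.exp (Complex.I * y) := by
    induction n with
    | zero => simp
    | succ n ih =>
      ext y
      rw [iteratedDeriv_succ, ih]
      have h : HasDerivAt (fun y : ℝ => Complex.I ^ n * Complex.exp (Complex.I * y))
          (Complex.I ^ n * (Complex.exp (Complex.I * y) * (Complex.I * 1))) y :=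
        ((((hasDerivAt_id (y : ℂ)).const_mul Complex.I).cexp).const_mul (Complex.I ^ n)).comp_ofReal
      rw [h.deriv]; ring
  rw [this]
  simp [Complex.norm_exp]

lemma airy_growth : Function.HasTemperateGrowth (fun y : ℝ => Complex.exp (Complex.I * y ^ 3)) := by
  have h : Function.HasTemperateGrowth (fun y : ℝ => y ^ 3) :=
    Function.HasTemperateGrowth.pow Function.HasTemperateGrowth.id' 3
  have := expI_growth.comp h
  convert this using 2
  simp

/-- The profile `H` multiplied by the time-one Airy phase `e^{iξ³}`. -/
def modu (H : 𝓢(ℝ, ℂ)) : 𝓢(ℝ, ℂ) :=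
  SchwartzMap.smulLeftCLM ℂ (fun y : ℝ => Complex.exp (Complex.I * y ^ 3)) H

lemma modu_apply (H : 𝓢(ℝ, ℂ)) (y : ℝ) : modu H y = Complex.exp (Complex.I * y ^ 3) * H y := by
  rw [modu, SchwartzMap.smulLeftCLM_apply_apply airy_growth, smul_eq_mul]

/-- The oscillatory integral `∫ e^{i(xξ+ξ³)} H(ξ) dξ`, a Schwartz function of `x`. -/
def osc (H : 𝓢(ℝ, ℂ)) : 𝓢(ℝ, ℂ) :=
  dil (-(2 * π)⁻¹) (by simp [Real.pi_ne_zero]) (𝓕 (modu H))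

lemma osc_apply (H : 𝓢(ℝ, ℂ)) (x : ℝ) :
    osc H x = ∫ ξ : ℝ, Complex.exp (Complex.I * (x * ξ + ξ ^ 3)) * H ξ := by
  rw [osc, dil_apply, SchwartzMap.fourier_coe, Real.fourier_real_eq_integral_exp_smul]
  congr 1; ext ξ
  rw [modu_apply, smul_eq_mul, ← mul_assoc, ← Complex.exp_add]
  congr 2
  have : (π : ℂ) ≠ 0 := by exact_mod_cast Real.pi_ne_zero
  push_cast
  field_simp

lemma deriv_osc (H : 𝓢(ℝ, ℂ)) (x : ℝ) :
    deriv (osc H) x =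
      Complex.I * ∫ ξ : ℝ, Complex.exp (Complex.I * (x * ξ + ξ ^ 3)) * ((ξ : ℂ) * H ξ) := by
  have tg : Function.HasTemperateGrowth (fun x : ℝ => (x : ℂ)) :=
    Function.Complex.hasTemperateGrowth_ofReal
  have e : (osc H : ℝ → ℂ) = fun x => 𝓕 (modu H : ℝ → ℂ) (-(2 * π)⁻¹ * x) := by
    ext x; rw [osc, dil_apply, SchwartzMap.fourier_coe]
  have hd := Real.hasDerivAt_fourier (f := (modu H : ℝ → ℂ)) (modu H).integrable (by
      have := (SchwartzMap.smulLeftCLM ℂ (fun x : ℝ => (x : ℂ)) (modu H)).integrable (μ := volume)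
      refine this.congr (Filter.Eventually.of_forall fun x => ?_)
      simp [SchwartzMap.smulLeftCLM_apply_apply tg]) (-(2 * π)⁻¹ * x)
  have hd2 := HasDerivAt.scomp x hd ((hasDerivAt_id x).const_mul (-(2 * π)⁻¹))
  rw [e]
  erw [hd2.deriv]
  rw [Real.fourier_real_eq_integral_exp_smul, mul_one, ← integral_smul, ← integral_const_mul]
  congr 1; ext ξ
  rw [modu_apply]
  have h1 : Complex.exp (Complex.I * (x * ξ + ξ ^ 3)) =
     Complex.exp (((-2 * π * ξ * (-(2 * π)⁻¹ * x) : ℝ) : ℂ) * Complex.I) *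
       Complex.exp (Complex.I * ξ ^ 3) := by
    rw [← Complex.exp_add]
    congr 1
    have : (π : ℂ) ≠ 0 := by exact_mod_cast Real.pi_ne_zero
    push_cast
    field_simp
  rw [h1]
  simp only [Complex.real_smul, smul_eq_mul]
  have : (π : ℂ) ≠ 0 := by exact_mod_cast Real.pi_ne_zero
  generalize Complex.exp (((-2 * π * ξ * (-(2 * π)⁻¹ * x) : ℝ) : ℂ) * Complex.I) = A
  push_cast
  field_simp

/-! ### The weight for the cubic phase -/

/-- The regularised square `φ'² + r²` of the phase derivative `φ'(ξ) = 3ξ² + x`. -/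
def den (r x ξ : ℝ) : ℝ := (3 * ξ ^ 2 + x) ^ 2 + r ^ 2

/-- The weight controlling all the terms produced by integration by parts. -/
def wt (r x ξ : ℝ) : ℝ := (r ^ 4 + ξ ^ 2) / den r x ξ

lemma den_pos {r : ℝ} (hr : 1 ≤ r) (x ξ : ℝ) : 0 < den r x ξ := by
  unfold den; positivity

lemma wt_nonneg {r : ℝ} (hr : 1 ≤ r) (x ξ : ℝ) : 0 ≤ wt r x ξ :=
  div_nonneg (by positivity) (den_pos hr x ξ).le

/-- Near the positive stationary point `a` (or `a = 0` when `x ≥ 0`) the phase derivative grows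
linearly with slope `≳ r²`. -/
lemma den_lower {r x ξ : ℝ} (hr : 1 ≤ r) (hx : r ^ 4 = 1 + |x|) (h0 : 0 ≤ ξ)
    (hξ : ξ ^ 2 ≤ r ^ 4) {a : ℝ} (ha : 0 ≤ a) (hax : 3 * a ^ 2 = max (-x) 0) :
    r ^ 4 * (ξ - a) ^ 2 + r ^ 2 ≤ 5 * den r x ξ := by
  unfold den
  have hr2 : 1 ≤ r ^ 2 := one_le_pow₀ hr
  rcases le_or_gt |x| 1 with h1 | h1
  · have hm : max (-x) 0 ≤ 1 := max_le ((neg_le_abs x).trans h1) zero_le_one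
    have h2 : (ξ - a) ^ 2 ≤ 2 := by nlinarith [mul_nonneg h0 ha]
    have h4 : r ^ 4 ≤ 2 := by linarith
    have : r ^ 4 * (ξ - a) ^ 2 ≤ 2 * 2 := by gcongr
    nlinarith [sq_nonneg (3 * ξ ^ 2 + x)]
  · rcases le_total x 0 with hx0 | hx0
    · rw [max_eq_left (by linarith)] at hax
      rw [abs_of_nonpos hx0] at hx h1
      have e : (3 * ξ ^ 2 + x) ^ 2 = 9 * (ξ + a) ^ 2 * (ξ - a) ^ 2 := by
        have : x = -(3 * a ^ 2) := by linarith
        rw [this]; ring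
      have : r ^ 4 ≤ 9 * (ξ + a) ^ 2 := by nlinarith [mul_nonneg h0 ha, sq_nonneg ξ]
      have := mul_le_mul_of_nonneg_right this (sq_nonneg (ξ - a))
      nlinarith [sq_nonneg (3 * ξ ^ 2 + x)]
    · rw [max_eq_right (by linarith)] at hax
      rw [abs_of_nonneg hx0] at hx h1
      have ha0 : a = 0 := by nlinarith
      subst ha0
      have : r ^ 4 * ξ ^ 2 ≤ 2 * x * ξ ^ 2 := by
        apply mul_le_mul_of_nonneg_right _ (sq_nonneg _); linarith
      rw [sub_zero]
      nlinarith [sq_nonneg (3 * ξ ^ 2 - x), mul_nonneg hx0 (sq_nonneg ξ)]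

/-- A Cauchy bump of height `r²` and width `1 / r` centred at `a`. -/
def bump (r a ξ : ℝ) : ℝ := r ^ 2 * (1 + (r * ξ - r * a) ^ 2)⁻¹

lemma bump_nonneg (r a ξ : ℝ) : 0 ≤ bump r a ξ := by unfold bump; positivity

lemma wt_le_aux {r x ξ : ℝ} (hr : 1 ≤ r) (hx : r ^ 4 = 1 + |x|) (h0 : 0 ≤ ξ)
    {a : ℝ} (ha : 0 ≤ a) (hax : 3 * a ^ 2 = max (-x) 0) :
    wt r x ξ ≤ 10 * bump r a ξ + (1 + ξ ^ 2)⁻¹ := by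
  have hD := den_pos hr x ξ
  have hb := bump_nonneg r a ξ
  rcases le_total (ξ ^ 2) (r ^ 4) with h | h
  · have := den_lower hr hx h0 h ha hax
    have h2 : wt r x ξ ≤ 10 * bump r a ξ := by
      unfold wt bump
      rw [div_le_iff₀ hD, ← div_eq_mul_inv, ← mul_div_assoc, div_mul_eq_mul_div,
        le_div_iff₀ (by positivity)]
      have e : r ^ 4 * (ξ - a) ^ 2 + r ^ 2 = r ^ 2 * (1 + (r * ξ - r * a) ^ 2) := by ring
      rw [e] at this
      calc (r ^ 4 + ξ ^ 2) * (1 + (r * ξ - r * a) ^ 2)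
          ≤ (2 * r ^ 4) * (1 + (r * ξ - r * a) ^ 2) := by gcongr; linarith
        _ = 2 * r ^ 2 * (r ^ 2 * (1 + (r * ξ - r * a) ^ 2)) := by ring
        _ ≤ 2 * r ^ 2 * (5 * den r x ξ) := by gcongr
        _ = _ := by ring
    have : 0 ≤ (1 + ξ ^ 2)⁻¹ := by positivity
    linarith
  · have h1 : 1 ≤ ξ ^ 2 := le_trans (one_le_pow₀ hr) h
    have h2 : wt r x ξ ≤ (1 + ξ ^ 2)⁻¹ := by
      unfold wt
      rw [div_le_iff₀ hD, inv_mul_eq_div, le_div_iff₀ (by positivity)]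
      have h3 : 2 * ξ ^ 2 ≤ 3 * ξ ^ 2 + x := by linarith [neg_abs_le x]
      unfold den
      have h4 : (2 * ξ ^ 2) ^ 2 ≤ (3 * ξ ^ 2 + x) ^ 2 := by gcongr
      nlinarith
    linarith

lemma wt_le {r x : ℝ} (hr : 1 ≤ r) (hx : r ^ 4 = 1 + |x|) :
    ∃ a : ℝ, ∀ ξ, wt r x ξ ≤ 10 * bump r a ξ + 10 * bump r (-a) ξ + (1 + ξ ^ 2)⁻¹ := by
  have hm : 0 ≤ max (-x) 0 := le_max_right _ _
  refine ⟨√(max (-x) 0 / 3), fun ξ => ?_⟩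
  have ha : 3 * √(max (-x) 0 / 3) ^ 2 = max (-x) 0 := by
    rw [Real.sq_sqrt (by positivity)]; ring
  set a := √(max (-x) 0 / 3)
  have ha0 : 0 ≤ a := Real.sqrt_nonneg _
  rcases le_total 0 ξ with h | h
  · have := wt_le_aux hr hx h ha0 ha
    linarith [bump_nonneg r (-a) ξ]
  · have := wt_le_aux (ξ := -ξ) hr hx (by linarith) ha0 ha
    have e1 : wt r x (-ξ) = wt r x ξ := by simp [wt, den]
    have e2 : bump r a (-ξ) = bump r (-a) ξ := by unfold bump; ring
    rw [e1, e2, neg_sq] at this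
    linarith [bump_nonneg r a ξ]

lemma integrable_bump {r : ℝ} (hr : 1 ≤ r) (a : ℝ) : Integrable (bump r a) := by
  have := ((integrable_inv_one_add_sq.comp_sub_right (r * a)).comp_mul_left'
    (R := r) (by positivity)).const_mul (r ^ 2)
  exact this

lemma integral_bump {r : ℝ} (hr : 1 ≤ r) (a : ℝ) : ∫ ξ, bump r a ξ = r * π := by
  unfold bump
  rw [integral_const_mul, Measure.integral_comp_mul_left (fun y => (1 + (y - r * a) ^ 2)⁻¹),
    integral_sub_right_eq_self (fun y => (1 + y ^ 2)⁻¹), integral_univ_inv_one_add_sq,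
    abs_of_pos (by positivity), smul_eq_mul]
  field_simp

lemma continuous_wt {r : ℝ} (hr : 1 ≤ r) (x : ℝ) : Continuous (wt r x) := by
  unfold wt
  refine Continuous.div (by fun_prop) (by unfold den; fun_prop) fun ξ => (den_pos hr x ξ).ne'

/-- The weight `wt` consists of two bumps of area `O(r)`, one at each stationary point, plus an
integrable tail. -/
lemma wt_integrable {r x : ℝ} (hr : 1 ≤ r) (hx : r ^ 4 = 1 + |x|) :
    Integrable (wt r x) ∧ ∫ ξ, wt r x ξ ≤ 100 * r := by
  obtain ⟨a, ha⟩ := wt_le hr hx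
  have hi1 := (integrable_bump hr a).const_mul 10
  have hi2 := (integrable_bump hr (-a)).const_mul 10
  have hi := (hi1.add hi2).add integrable_inv_one_add_sq
  have hw : Integrable (wt r x) := by
    refine hi.mono' (continuous_wt hr x).aestronglyMeasurable
      (Filter.Eventually.of_forall fun ξ => ?_)
    rw [Real.norm_of_nonneg (wt_nonneg hr x ξ)]
    exact ha ξ
  refine ⟨hw, (integral_mono hw hi ha).trans ?_⟩
  rw [integral_add' (hi1.add hi2) integrable_inv_one_add_sq, integral_add' hi1 hi2,
    integral_const_mul, integral_const_mul, integral_bump hr, integral_bump hr,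
    integral_univ_inv_one_add_sq]
  nlinarith [Real.pi_lt_d2, Real.pi_pos]

/-! ### Pointwise bounds by integration by parts -/

lemma integrable_growth (G : 𝓢(ℝ, ℂ)) {c : ℝ → ℂ} (hc : Continuous c)
    (h : ∀ ξ, ‖c ξ‖ ≤ 10 * (1 + ξ ^ 2)) : Integrable (fun ξ => c ξ * G ξ) := by
  have h1 := (G.integrable_pow_mul (μ := volume) 0).add (G.integrable_pow_mul (μ := volume) 2)
  refine (h1.const_mul 10).mono' (hc.mul G.continuous).aestronglyMeasurable
    (Filter.Eventually.of_forall fun ξ => ?_)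
  rw [norm_mul]
  calc ‖c ξ‖ * ‖G ξ‖ ≤ 10 * (1 + ξ ^ 2) * ‖G ξ‖ := by gcongr; exact h ξ
    _ = _ := by simp; ring

/-- Cauchy–Schwarz for a real weight against a Schwartz function. -/
lemma cauchy_schwarz {q : ℝ → ℝ} (hq : Continuous q) (hq2 : Integrable (fun ξ => q ξ ^ 2))
    (G : 𝓢(ℝ, ℂ)) :
    Integrable (fun ξ => |q ξ| * ‖G ξ‖) ∧
    ∫ ξ, |q ξ| * ‖G ξ‖ ≤ √(∫ ξ, q ξ ^ 2) * √(∫ ξ, ‖G ξ‖ ^ 2) := by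
  have m1 : MemLp (fun ξ => |q ξ|) 2 volume := by
    rw [memLp_two_iff_integrable_sq hq.abs.aestronglyMeasurable]
    simpa using hq2
  have m2 : MemLp (fun ξ => ‖G ξ‖) 2 volume := (G.memLp 2).norm
  refine ⟨m1.integrable_mul m2, ?_⟩
  have := integral_mul_le_Lp_mul_Lq_of_nonneg (μ := volume) Real.HolderConjugate.two_two
    (f := fun ξ => |q ξ|) (g := fun ξ => ‖G ξ‖)
    (Filter.Eventually.of_forall fun ξ => abs_nonneg _)
    (Filter.Eventually.of_forall fun ξ => norm_nonneg _) (by simpa using m1) (by simpa using m2)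
  simpa [Real.sqrt_eq_rpow] using this

/-- Integration by parts with multiplier `q`: if `φ' q` approximates `m`, then the oscillatory
integral of `m H` is controlled by the weight `wt`. -/
lemma osc_bound (H : 𝓢(ℝ, ℂ)) {ε : ℝ} (hε : 0 ≤ ε) (hH : ∀ ξ, ‖H ξ‖ ≤ ε)
    (hH' : ∫ ξ, ‖deriv H ξ‖ ^ 2 ≤ ε ^ 2) {r x : ℝ} (hr : 1 ≤ r) (hx : r ^ 4 = 1 + |x|)
    {q q' m : ℝ → ℝ} (hq : ∀ ξ, HasDerivAt q (q' ξ) ξ) (hqc' : Continuous q') (hm : Continuous m)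
    (g1 : ∀ ξ, |q ξ| ≤ 10 * (1 + ξ ^ 2)) (g2 : ∀ ξ, |q' ξ| ≤ 10 * (1 + ξ ^ 2))
    (g3 : ∀ ξ, |(3 * ξ ^ 2 + x) * q ξ| ≤ 10 * (1 + ξ ^ 2)) (g4 : ∀ ξ, |m ξ| ≤ 10 * (1 + ξ ^ 2))
    {A B : ℝ} (hA : 0 ≤ A) (hB : 0 ≤ B)
    (h1 : ∀ ξ, |m ξ - (3 * ξ ^ 2 + x) * q ξ| + |q' ξ| ≤ A * wt r x ξ)
    (h2 : ∀ ξ, q ξ ^ 2 ≤ B * wt r x ξ) :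
    ‖∫ ξ : ℝ, Complex.exp (Complex.I * (x * ξ + ξ ^ 3)) * ((m ξ : ℂ) * H ξ)‖ ≤
      ε * (A * (100 * r) + √(B * (100 * r))) := by
  obtain ⟨wi, wb⟩ := wt_integrable hr hx
  have hqc : Continuous q := continuous_iff_continuousAt.2 fun ξ => (hq ξ).continuousAt
  set e : ℝ → ℂ := fun ξ => Complex.exp (Complex.I * (x * ξ + ξ ^ 3)) with he
  have hec : Continuous e := by fun_prop
  have hen : ∀ ξ, ‖e ξ‖ = 1 := fun ξ => by
    have : Complex.I * (x * ξ + ξ ^ 3) = ((x * ξ + ξ ^ 3 : ℝ) : ℂ) * Complex.I := by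
      push_cast; ring
    rw [he]; simp only
    rw [this, Complex.norm_exp_ofReal_mul_I]
  have hed : ∀ ξ : ℝ, HasDerivAt e (e ξ * (Complex.I * (3 * ξ ^ 2 + x))) ξ := fun ξ => by
    have : HasDerivAt (fun z : ℂ => Complex.exp (Complex.I * (x * z + z ^ 3)))
        (Complex.exp (Complex.I * (x * ξ + ξ ^ 3)) * (Complex.I * (x * 1 + 3 * ξ ^ 2))) (ξ : ℂ) := by
      have := ((((hasDerivAt_id (ξ : ℂ)).const_mul (x : ℂ)).add
        (hasDerivAt_pow 3 (ξ : ℂ))).const_mul Complex.I).cexp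
      simpa using this
    convert this.comp_ofReal using 1
    rw [he]; ring
  set dH : 𝓢(ℝ, ℂ) := SchwartzMap.derivCLM ℂ ℂ H with hdH
  have hdHa : ∀ ξ, dH ξ = deriv H ξ := fun ξ => by rw [hdH, SchwartzMap.derivCLM_apply]
  have hΦ : ∀ ξ, HasDerivAt (fun ξ => e ξ * (q ξ : ℂ) * H ξ)
      (e ξ * (Complex.I * (((3 * ξ ^ 2 + x) * q ξ : ℝ) : ℂ)) * H ξ + e ξ * (q' ξ : ℂ) * H ξ
        + e ξ * (q ξ : ℂ) * dH ξ) ξ := fun ξ => by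
    have := ((hed ξ).mul (hq ξ).ofReal_comp).mul (H.hasDerivAt ξ)
    refine HasDerivAt.congr_deriv this ?_
    rw [hdHa, Pi.mul_apply]; push_cast; ring
  have nr : ∀ a : ℝ, ‖(a : ℂ)‖ = |a| := fun a => by simp
  have i0 : Integrable (fun ξ => e ξ * (q ξ : ℂ) * H ξ) :=
    integrable_growth H (by fun_prop) fun ξ => by rw [norm_mul, hen, one_mul, nr]; exact g1 ξ
  have i1 : Integrable (fun ξ => e ξ * (Complex.I * (((3 * ξ ^ 2 + x) * q ξ : ℝ) : ℂ)) * H ξ) :=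
    integrable_growth H (by fun_prop) fun ξ => by
      rw [norm_mul, norm_mul, hen, one_mul, nr, Complex.norm_I, one_mul]; exact g3 ξ
  have i2 : Integrable (fun ξ => e ξ * (q' ξ : ℂ) * H ξ) :=
    integrable_growth H (by fun_prop) fun ξ => by rw [norm_mul, hen, one_mul, nr]; exact g2 ξ
  have i3 : Integrable (fun ξ => e ξ * (q ξ : ℂ) * dH ξ) :=
    integrable_growth dH (by fun_prop) fun ξ => by rw [norm_mul, hen, one_mul, nr]; exact g1 ξ
  have i4 : Integrable (fun ξ => e ξ * (m ξ : ℂ) * H ξ) :=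
    integrable_growth H (by fun_prop) fun ξ => by rw [norm_mul, hen, one_mul, nr]; exact g4 ξ
  have hz := integral_eq_zero_of_hasDerivAt_of_integrable hΦ ((i1.add i2).add i3) i0
  have key : ∫ ξ : ℝ, e ξ * ((m ξ : ℂ) * H ξ) = ∫ ξ : ℝ, (e ξ * (m ξ : ℂ) * H ξ + Complex.I *
      (e ξ * (Complex.I * (((3 * ξ ^ 2 + x) * q ξ : ℝ) : ℂ)) * H ξ + e ξ * (q' ξ : ℂ) * H ξ
        + e ξ * (q ξ : ℂ) * dH ξ)) := by
    have i5 := ((i1.add i2).add i3).const_mul Complex.I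
    simp only [Pi.add_apply] at i5
    rw [integral_add i4 i5, integral_const_mul, hz]
    simp [mul_assoc]
  have q2 : Integrable (fun ξ => q ξ ^ 2) := by
    refine (wi.const_mul B).mono' (hqc.pow 2).aestronglyMeasurable
      (Filter.Eventually.of_forall fun ξ => ?_)
    rw [Real.norm_of_nonneg (sq_nonneg _)]; exact h2 ξ
  obtain ⟨ci, cb⟩ := cauchy_schwarz hqc q2 dH
  have maj := (wi.const_mul (ε * A)).add ci
  change ‖∫ ξ : ℝ, e ξ * ((m ξ : ℂ) * H ξ)‖ ≤ _
  rw [key]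
  refine (norm_integral_le_of_norm_le maj (Filter.Eventually.of_forall fun ξ => ?_)).trans ?_
  · have e1 : e ξ * (m ξ : ℂ) * H ξ + Complex.I *
      (e ξ * (Complex.I * (((3 * ξ ^ 2 + x) * q ξ : ℝ) : ℂ)) * H ξ + e ξ * (q' ξ : ℂ) * H ξ
        + e ξ * (q ξ : ℂ) * dH ξ) = e ξ * (((m ξ - (3 * ξ ^ 2 + x) * q ξ : ℝ) : ℂ) * H ξ) +
        Complex.I * (e ξ * ((q' ξ : ℂ) * H ξ)) + Complex.I * (e ξ * ((q ξ : ℂ) * dH ξ)) := by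
      push_cast
      linear_combination (e ξ * ((3 * ξ ^ 2 + x) * q ξ)) * H ξ * Complex.I_mul_I
    rw [e1]
    refine norm_add₃_le.trans ?_
    simp only [norm_mul, hen, Complex.norm_I, one_mul, nr, Pi.add_apply]
    have := mul_le_mul (h1 ξ) (hH ξ) (norm_nonneg _) (mul_nonneg hA (wt_nonneg hr x ξ))
    nlinarith
  · rw [integral_add' (wi.const_mul (ε * A)) ci, integral_const_mul]
    have s1 : √(∫ ξ, ‖dH ξ‖ ^ 2) ≤ ε := by
      simp_rw [hdHa]
      exact Real.sqrt_le_iff.2 ⟨hε, hH'⟩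
    have s2 : √(∫ ξ, q ξ ^ 2) ≤ √(B * (100 * r)) := by
      apply Real.sqrt_le_sqrt
      refine (integral_mono q2 (wi.const_mul B) h2).trans ?_
      rw [integral_const_mul]
      gcongr
    have : √(∫ ξ, q ξ ^ 2) * √(∫ ξ, ‖dH ξ‖ ^ 2) ≤ √(B * (100 * r)) * ε := by gcongr
    have : ε * A * ∫ ξ, wt r x ξ ≤ ε * A * (100 * r) := by gcongr
    nlinarith

/-- The integration-by-parts multiplier `φ' / (φ'² + r²)`, a regularisation of `1 / φ'`. -/
def ibp (r x ξ : ℝ) : ℝ := (3 * ξ ^ 2 + x) / den r x ξ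

/-- The derivative of `ibp r x`. -/
def ibp' (r x ξ : ℝ) : ℝ := 6 * ξ * (r ^ 2 - (3 * ξ ^ 2 + x) ^ 2) / den r x ξ ^ 2

lemma ibp_hasDerivAt {r : ℝ} (hr : 1 ≤ r) (x ξ : ℝ) : HasDerivAt (ibp r x) (ibp' r x ξ) ξ := by
  have hD := (den_pos hr x ξ).ne'
  have h1 : HasDerivAt (fun ξ : ℝ => 3 * ξ ^ 2 + x) (6 * ξ) ξ := by
    refine HasDerivAt.congr_deriv (((hasDerivAt_pow 2 ξ).const_mul 3).add_const x) ?_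
    norm_num; ring
  have h2 : HasDerivAt (den r x) (2 * (3 * ξ ^ 2 + x) * (6 * ξ)) ξ := by
    refine HasDerivAt.congr_deriv ((h1.pow 2).add_const (r ^ 2)) ?_
    norm_num
  refine HasDerivAt.congr_deriv (h1.div h2 hD) ?_
  unfold ibp'
  congr 1
  unfold den; ring

lemma ibp_abs {r : ℝ} (hr : 1 ≤ r) (x ξ : ℝ) :
    |ibp r x ξ| ≤ 1 ∧ |(3 * ξ ^ 2 + x) * ibp r x ξ| ≤ 1 ∧ ibp r x ξ ^ 2 ≤ 1 / den r x ξ ∧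
    |ibp' r x ξ| ≤ 6 * |ξ| / den r x ξ ∧ 1 - (3 * ξ ^ 2 + x) * ibp r x ξ = r ^ 2 / den r x ξ
    ∧ 1 ≤ den r x ξ ∧ |ibp r x ξ| ≤ (3 * ξ ^ 2 + |x|) / den r x ξ := by
  have hD := den_pos hr x ξ
  have hr2 : 1 ≤ r ^ 2 := one_le_pow₀ hr
  have hDe : den r x ξ = (3 * ξ ^ 2 + x) ^ 2 + r ^ 2 := rfl
  refine ⟨?_, ?_, ?_, ?_, ?_, ?_, ?_⟩
  · unfold ibp
    rw [abs_div, abs_of_pos hD, div_le_one hD, hDe, ← sq_abs (3 * ξ ^ 2 + x)]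
    nlinarith [sq_nonneg (|3 * ξ ^ 2 + x| - 1)]
  · unfold ibp
    rw [← mul_div_assoc, abs_div, abs_of_pos hD, div_le_one hD, hDe, ← sq, abs_of_nonneg (sq_nonneg _)]
    linarith
  · unfold ibp
    rw [div_pow, div_le_div_iff₀ (by positivity) hD, one_mul, sq (den r x ξ)]
    gcongr
    rw [hDe]; linarith
  · unfold ibp'
    rw [abs_div, abs_of_pos (by positivity : 0 < den r x ξ ^ 2), div_le_div_iff₀ (by positivity) hD]
    rw [abs_mul, abs_mul, abs_of_pos (by norm_num : (0:ℝ) < 6), sq (den r x ξ), ← mul_assoc]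
    gcongr
    rw [hDe, abs_le]
    constructor <;> nlinarith [sq_nonneg (3 * ξ ^ 2 + x)]
  · unfold ibp
    field_simp
    rw [hDe]; ring
  · rw [hDe]; nlinarith [sq_nonneg (3 * ξ ^ 2 + x)]
  · unfold ibp
    rw [abs_div, abs_of_pos hD]
    gcongr
    refine (abs_add_le _ _).trans ?_
    rw [abs_of_nonneg (by positivity)]

lemma continuous_ibp' {r : ℝ} (hr : 1 ≤ r) (x : ℝ) : Continuous (ibp' r x) := by
  unfold ibp'
  refine Continuous.div (by fun_prop) (by unfold den; fun_prop) fun ξ => ?_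
  exact pow_ne_zero 2 (den_pos hr x ξ).ne'

/-- Pointwise decay of the time-one evolution, `|U(x)| ≲ ⟨x⟩^{-1/4}`, with `r = ⟨x⟩^{1/4}`. -/
lemma osc_le (H : 𝓢(ℝ, ℂ)) {ε : ℝ} (hε : 0 ≤ ε) (hH : ∀ ξ, ‖H ξ‖ ≤ ε)
    (hH' : ∫ ξ, ‖deriv H ξ‖ ^ 2 ≤ ε ^ 2) {r x : ℝ} (hr : 1 ≤ r) (hx : r ^ 4 = 1 + |x|) :
    ‖osc H x‖ ≤ 410 * ε / r := by
  have hr2 : 1 ≤ r ^ 2 := one_le_pow₀ hr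
  have r0 : 0 < r := by linarith
  have := osc_bound H hε hH hH' hr hx (q := ibp r x) (q' := ibp' r x) (m := fun _ => 1)
    (ibp_hasDerivAt hr x) (continuous_ibp' hr x) continuous_const
    (fun ξ => (ibp_abs hr x ξ).1.trans (by nlinarith [sq_nonneg ξ]))
    (fun ξ => by
      obtain ⟨-, -, -, h, -, h1, -⟩ := ibp_abs hr x ξ
      refine h.trans ((div_le_self (by positivity) h1).trans ?_)
      nlinarith [sq_nonneg (|ξ| - 1), sq_abs ξ])
    (fun ξ => (ibp_abs hr x ξ).2.1.trans (by nlinarith [sq_nonneg ξ]))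
    (fun ξ => by rw [abs_one]; nlinarith [sq_nonneg ξ])
    (A := 4 / r ^ 2) (B := 1 / r ^ 4) (by positivity) (by positivity)
    (fun ξ => by
      obtain ⟨-, -, -, h, h', h1, -⟩ := ibp_abs hr x ξ
      have hD := den_pos hr x ξ
      rw [h', abs_of_nonneg (by positivity)]
      refine (add_le_add_right h _).trans ?_
      unfold wt
      rw [← add_div, ← mul_div_assoc]
      gcongr
      rw [div_mul_eq_mul_div, le_div_iff₀ (by positivity)]
      nlinarith [sq_nonneg (r ^ 2 - |ξ|), sq_abs ξ])
    (fun ξ => by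
      obtain ⟨-, -, h, -⟩ := ibp_abs hr x ξ
      have hD := den_pos hr x ξ
      refine h.trans ?_
      unfold wt
      rw [← mul_div_assoc]
      gcongr
      rw [div_mul_eq_mul_div, le_div_iff₀ (by positivity)]
      nlinarith [sq_nonneg ξ])
  rw [osc_apply]
  simp only [Complex.ofReal_one, one_mul] at this
  refine this.trans ?_
  have s : √(1 / r ^ 4 * (100 * r)) ≤ 10 / r := by
    rw [Real.sqrt_le_iff]
    refine ⟨by positivity, ?_⟩
    rw [div_pow, one_div_mul_eq_div, div_le_div_iff₀ (by positivity) (by positivity)]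
    have : r ^ 3 ≤ r ^ 4 := pow_le_pow_right₀ hr (by norm_num)
    nlinarith
  calc ε * (4 / r ^ 2 * (100 * r) + √(1 / r ^ 4 * (100 * r)))
      ≤ ε * (4 / r ^ 2 * (100 * r) + 10 / r) := by gcongr
    _ = 410 * ε / r := by field_simp; ring

/-- Growth of the derivative, `|U'(x)| ≲ ⟨x⟩^{1/4}`: the stationary frequency has size
`⟨x⟩^{1/2}`, so one derivative costs `r²`. -/
lemma deriv_osc_le (H : 𝓢(ℝ, ℂ)) {ε : ℝ} (hε : 0 ≤ ε) (hH : ∀ ξ, ‖H ξ‖ ≤ ε)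
    (hH' : ∫ ξ, ‖deriv H ξ‖ ^ 2 ≤ ε ^ 2) {r x : ℝ} (hr : 1 ≤ r) (hx : r ^ 4 = 1 + |x|) :
    ‖deriv (osc H) x‖ ≤ 1010 * ε * r := by
  have hr2 : 1 ≤ r ^ 2 := one_le_pow₀ hr
  have r0 : 0 < r := by linarith
  have hibp_c : Continuous (ibp r x) :=
    continuous_iff_continuousAt.2 fun ξ => (ibp_hasDerivAt hr x ξ).continuousAt
  have hξ : ∀ ξ : ℝ, |ξ| ≤ 10 * (1 + ξ ^ 2) := fun ξ => by
    nlinarith [sq_nonneg (|ξ| - 1), sq_abs ξ]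
  have := osc_bound H hε hH hH' hr hx (q := fun ξ => ξ * ibp r x ξ)
    (q' := fun ξ => 1 * ibp r x ξ + ξ * ibp' r x ξ) (m := fun ξ => ξ)
    (fun ξ => (hasDerivAt_id ξ).mul (ibp_hasDerivAt hr x ξ))
    (by have := continuous_ibp' hr x; fun_prop) continuous_id
    (fun ξ => by
      rw [abs_mul]
      exact (mul_le_of_le_one_right (abs_nonneg _) (ibp_abs hr x ξ).1).trans (hξ ξ))
    (fun ξ => by
      obtain ⟨h0, -, -, h, -, h1, -⟩ := ibp_abs hr x ξ
      have h2 : |ibp' r x ξ| ≤ 6 * |ξ| := h.trans (div_le_self (by positivity) h1)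
      refine (abs_add_le _ _).trans ?_
      rw [abs_mul, abs_mul, abs_one]
      nlinarith [sq_abs ξ, mul_le_mul_of_nonneg_left h2 (abs_nonneg ξ)])
    (fun ξ => by
      have h := (ibp_abs hr x ξ).2.1
      rw [mul_left_comm, abs_mul]
      exact (mul_le_of_le_one_right (abs_nonneg _) h).trans (hξ ξ))
    hξ (A := 10) (B := 1) (by positivity) (by positivity)
    (fun ξ => by
      obtain ⟨-, -, -, h, h', h1, h2⟩ := ibp_abs hr x ξ
      have hD := den_pos hr x ξ
      have e : ξ - (3 * ξ ^ 2 + x) * (ξ * ibp r x ξ) = ξ * (r ^ 2 / den r x ξ) := by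
        rw [← h']; ring
      rw [e, abs_mul, abs_of_nonneg (by positivity : 0 ≤ r ^ 2 / den r x ξ)]
      have h3 : |1 * ibp r x ξ + ξ * ibp' r x ξ| ≤
          (3 * ξ ^ 2 + |x|) / den r x ξ + |ξ| * (6 * |ξ| / den r x ξ) := by
        refine (abs_add_le _ _).trans ?_
        rw [abs_mul, abs_mul, abs_one, one_mul]
        gcongr
      refine (add_le_add_right h3 _).trans ?_
      unfold wt
      rw [← mul_div_assoc, ← mul_div_assoc, ← add_div, ← add_div, ← mul_div_assoc]
      gcongr
      nlinarith [sq_nonneg (r ^ 2 - |ξ|), sq_abs ξ])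
    (fun ξ => by
      obtain ⟨-, -, h, -⟩ := ibp_abs hr x ξ
      have hD := den_pos hr x ξ
      rw [mul_pow]
      refine (mul_le_mul_of_nonneg_left h (sq_nonneg ξ)).trans ?_
      unfold wt
      rw [← mul_div_assoc, one_mul]
      gcongr
      nlinarith [sq_nonneg r, pow_pos r0 4])
  rw [deriv_osc, norm_mul, Complex.norm_I, one_mul]
  refine this.trans ?_
  have s : √(1 * (100 * r)) ≤ 10 * r := by
    rw [Real.sqrt_le_iff]
    refine ⟨by positivity, ?_⟩
    nlinarith
  calc ε * (10 * (100 * r) + √(1 * (100 * r)))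
      ≤ ε * (10 * (100 * r) + 10 * r) := by gcongr
    _ = 1010 * ε * r := by ring

/-! ### Fractional derivatives by finite differences -/

/-- The majorant of `|F(x+s) - F(x)|²` when `F` decays like `⟨x⟩^{-3/4}` and `F'` like
`⟨x⟩^{-1/4}`: comparable to `min (⟨x⟩^{-3/2}) (s² ⟨x⟩^{-1/2})`. -/
def incr (s y : ℝ) : ℝ := s ^ 2 / (√(1 + y) * (1 + s ^ 2 * (1 + y)))

lemma incr_Ioi {s : ℝ} (hs : 0 < s) :
    IntegrableOn (incr s) (Set.Ioi 0) ∧ ∫ y in Set.Ioi 0, incr s y ≤ π * s := by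
  have hd : ∀ y ∈ Set.Ici (0:ℝ),
      HasDerivAt (fun y => 2 * s * Real.arctan (s * √(1 + y))) (incr s y) y := by
    intro y hy
    have hy' : 0 < 1 + y := by have : 0 ≤ y := hy; linarith
    have h := (((((hasDerivAt_id y).const_add 1).sqrt hy'.ne').const_mul s).arctan).const_mul (2 * s)
    refine h.congr_deriv ?_
    simp only [id, incr]
    rw [mul_pow, Real.sq_sqrt hy'.le]
    have : 0 < √(1 + y) := Real.sqrt_pos.2 hy'
    field_simp
  have hp : ∀ y ∈ Set.Ioi (0:ℝ), 0 ≤ incr s y := by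
    intro y hy
    have : 0 < y := hy
    unfold incr; positivity
  have ht : Filter.Tendsto (fun y => 2 * s * Real.arctan (s * √(1 + y))) Filter.atTop
      (nhds (2 * s * (π / 2))) := by
    refine Filter.Tendsto.const_mul _ ?_
    refine (tendsto_nhds_of_tendsto_nhdsWithin Real.tendsto_arctan_atTop).comp ?_
    refine Filter.Tendsto.const_mul_atTop hs ?_
    exact Real.tendsto_sqrt_atTop.comp (Filter.tendsto_atTop_add_const_left _ _ Filter.tendsto_id)
  refine ⟨integrableOn_Ioi_deriv_of_nonneg' hd hp ht, ?_⟩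
  rw [integral_Ioi_of_hasDerivAt_of_nonneg' hd hp ht]
  have : 0 ≤ Real.arctan (s * √(1 + 0)) := Real.arctan_nonneg.2 (by positivity)
  calc _ ≤ 2 * s * (π / 2) := sub_le_self _ (by positivity)
    _ = π * s := by ring

/-- `∫ min(⟨x⟩^{-3/2}, s² ⟨x⟩^{-1/2}) dx ≲ s`, which is what gives `α < 1/2` derivatives in `L²`. -/
lemma incr_integral {s : ℝ} (hs : 0 < s) :
    Integrable (fun x => incr s |x|) ∧ ∫ x, incr s |x| ≤ 2 * π * s := by
  obtain ⟨h1, h2⟩ := incr_Ioi hs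
  constructor
  · have a1 : IntegrableOn (fun x => incr s |x|) (Set.Ioi 0) :=
      h1.congr_fun (fun x hx => by rw [abs_of_pos hx]) measurableSet_Ioi
    have a2 : IntegrableOn (fun x => incr s |x|) (Set.Iic 0) := by
      have := a1.comp_neg
      simp only [abs_neg] at this
      rw [integrableOn_Iic_iff_integrableOn_Iio]
      simpa using this
    rw [← integrableOn_univ, ← Set.Iic_union_Ioi (a := (0:ℝ))]
    exact a2.union a1
  · rw [integral_comp_abs (f := incr s)]; linarith

lemma min_le_incr {s x A K : ℝ} (hK : 0 ≤ K) (h1 : A ≤ K / √(1 + |x|) ^ 3)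
    (h2 : A ≤ K * s ^ 2 / √(1 + |x|)) : A ≤ 2 * K * incr s |x| := by
  have hb2 : √(1 + |x|) ^ 2 = 1 + |x| := Real.sq_sqrt (by positivity)
  have hb : 0 < √(1 + |x|) := by positivity
  unfold incr
  rw [← hb2, ]
  rw [Real.sqrt_sq hb.le]
  set b := √(1 + |x|)
  rcases le_total (s ^ 2 * b ^ 2) 1 with h | h
  · refine h2.trans ?_
    rw [← mul_div_assoc, div_le_div_iff₀ hb (by positivity)]
    have := mul_le_mul_of_nonneg_left h (by positivity : 0 ≤ K * s ^ 2 * b)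
    nlinarith
  · refine h1.trans ?_
    rw [← mul_div_assoc, div_le_div_iff₀ (by positivity) (by positivity)]
    have := mul_le_mul_of_nonneg_left h (by positivity : 0 ≤ K * b)
    nlinarith

lemma half_le {x y : ℝ} (h : |y - x| ≤ 1) : √(1 + |x|) ≤ 2 * √(1 + |y|) := by
  rw [Real.sqrt_le_iff]
  refine ⟨by positivity, ?_⟩
  rw [mul_pow, Real.sq_sqrt (by positivity)]
  have := abs_sub_abs_le_abs_sub x y
  rw [abs_sub_comm] at this
  linarith [abs_nonneg y]

lemma incr_bound (F : 𝓢(ℝ, ℂ)) {M : ℝ} (hM : 0 ≤ M)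
    (h1 : ∀ x, ‖F x‖ ^ 2 ≤ M / √(1 + |x|) ^ 3) (h2 : ∀ x, ‖deriv F x‖ ^ 2 ≤ M / √(1 + |x|))
    {s : ℝ} (hs : 0 < s) (hs1 : s ≤ 1) :
    ∫ x, ‖F (x + s) - F x‖ ^ 2 ≤ 256 * M * s := by
  obtain ⟨i1, i2⟩ := incr_integral hs
  refine (integral_mono_of_nonneg (Filter.Eventually.of_forall fun x => by positivity)
    (i1.const_mul (2 * (18 * M))) (Filter.Eventually.of_forall fun x => ?_)).trans ?_
  · have hb : 0 < √(1 + |x|) := by positivity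
    refine min_le_incr (by positivity) ?_ ?_
    · have hh := half_le (x := x) (y := x + s) (by rw [add_sub_cancel_left, abs_of_pos hs]; exact hs1)
      have hb' : 0 < √(1 + |x + s|) := by positivity
      have h3 : M / √(1 + |x + s|) ^ 3 ≤ 8 * M / √(1 + |x|) ^ 3 := by
        rw [div_le_div_iff₀ (by positivity) (by positivity)]
        have : √(1 + |x|) ^ 3 ≤ (2 * √(1 + |x + s|)) ^ 3 := by gcongr
        nlinarith
      have h4 := h1 (x + s)
      have h5 := h1 x
      have h6 : ‖F (x + s) - F x‖ ^ 2 ≤ 2 * ‖F (x + s)‖ ^ 2 + 2 * ‖F x‖ ^ 2 := by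
        have : ‖F (x + s) - F x‖ ^ 2 ≤ (‖F (x + s)‖ + ‖F x‖) ^ 2 := by
          gcongr; exact norm_sub_le _ _
        nlinarith [sq_nonneg (‖F (x + s)‖ - ‖F x‖)]
      calc _ ≤ 2 * (8 * M / √(1 + |x|) ^ 3) + 2 * (M / √(1 + |x|) ^ 3) := by linarith
        _ = _ := by ring
    · have h3 : ∀ y ∈ Set.Icc x (x + s), ‖deriv F y‖ ≤ √(2 * M / √(1 + |x|)) := by
        intro y hy
        have hh := half_le (x := x) (y := y) (by
          rw [abs_le]; constructor <;> linarith [hy.1, hy.2])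
        have hb' : 0 < √(1 + |y|) := by positivity
        apply Real.le_sqrt_of_sq_le
        refine (h2 y).trans ?_
        rw [div_le_div_iff₀ (by positivity) (by positivity)]
        nlinarith
      have h4 := (convex_Icc x (x + s)).norm_image_sub_le_of_norm_deriv_le
        (fun y _ => F.differentiableAt) h3 (Set.left_mem_Icc.2 (by linarith))
        (Set.right_mem_Icc.2 (by linarith))
      rw [add_sub_cancel_left, Real.norm_of_nonneg hs.le] at h4
      calc ‖F (x + s) - F x‖ ^ 2 ≤ (√(2 * M / √(1 + |x|)) * s) ^ 2 := by gcongr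
        _ = 2 * M * s ^ 2 / √(1 + |x|) := by
          rw [mul_pow, Real.sq_sqrt (by positivity)]; ring
        _ ≤ 18 * M * s ^ 2 / √(1 + |x|) := by gcongr; norm_num
  · rw [integral_const_mul]
    have : 2 * (18 * M) * ∫ x, incr s |x| ≤ 2 * (18 * M) * (2 * π * s) := by gcongr
    have h7 : 0 ≤ M * s := by positivity
    nlinarith [Real.pi_lt_d2]

lemma sq_bound (F : 𝓢(ℝ, ℂ)) {M : ℝ} (hM : 0 ≤ M)
    (h1 : ∀ x, ‖F x‖ ^ 2 ≤ M / √(1 + |x|) ^ 3) : ∫ x, ‖F x‖ ^ 2 ≤ 16 * M := by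
  obtain ⟨i1, i2⟩ := incr_integral one_pos
  refine (integral_mono_of_nonneg (Filter.Eventually.of_forall fun x => by positivity)
    (i1.const_mul (2 * M)) (Filter.Eventually.of_forall fun x => ?_)).trans ?_
  · refine min_le_incr hM (h1 x) ((h1 x).trans ?_)
    have : 1 ≤ √(1 + |x|) := Real.one_le_sqrt.2 (by linarith [abs_nonneg x])
    rw [one_pow, mul_one]
    gcongr
    exact le_self_pow₀ this (by norm_num)
  · rw [integral_const_mul]
    have : 2 * M * ∫ x, incr 1 |x| ≤ 2 * M * (2 * π * 1) := by gcongr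
    nlinarith [Real.pi_lt_d2]

/-- Plancherel for the increment `F(·+s) - F`. -/
lemma FT_shift (F : 𝓢(ℝ, ℂ)) (s : ℝ) :
    ∫ k : ℝ, ‖(Complex.exp (Complex.I * (k * s : ℝ)) - 1) * FT F k‖ ^ 2 =
      ∫ x, ‖F (x + s) - F x‖ ^ 2 := by
  set G : 𝓢(ℝ, ℂ) := SchwartzMap.compSubConstCLM ℂ (-s) F - F with hG
  have hGa : ∀ x, G x = F (x + s) - F x := fun x => by
    rw [hG, _root_.sub_apply, SchwartzMap.compSubConstCLM_apply, sub_neg_eq_add]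
  simp_rw [← hGa]
  rw [← plancherel]
  congr 1; ext k
  congr 2
  have hi : ∀ K : 𝓢(ℝ, ℂ), Integrable fun x : ℝ => Complex.exp (-(Complex.I * x * k)) * K x := by
    intro K
    refine integrable_growth K (by fun_prop) fun x => ?_
    rw [Complex.norm_exp]
    simp
    nlinarith [sq_nonneg x]
  have hi2 : Integrable fun x : ℝ => Complex.exp (-(Complex.I * x * k)) * F (x + s) := by
    have := hi (SchwartzMap.compSubConstCLM ℂ (-s) F)
    simpa [SchwartzMap.compSubConstCLM_apply] using this
  simp only [FT]
  rw [mul_left_comm]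
  congr 1
  simp_rw [hGa, mul_sub]
  rw [integral_sub hi2 (hi F), sub_mul, one_mul]
  congr 1
  rw [← integral_const_mul,
    ← integral_add_right_eq_self (fun x : ℝ => _ * (Complex.exp (-(Complex.I * x * k)) * F x)) s]
  congr 1; ext x
  rw [← mul_assoc, ← Complex.exp_add]
  congr 2
  push_cast; ring

/-- `|k|^{2α}` is controlled by the truncated Gagliardo integral `∫₀¹ |e^{iks}-1|² s^{-1-2α} ds`:
for `|k| > 1` it suffices to integrate over `s ∈ (1/(2|k|), 1/|k|]`. -/
lemma kernel_lower {α : ℝ} (hα : 0 ≤ α) (k : ℝ) :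
    ENNReal.ofReal (|k| ^ (2 * α)) ≤ 1 + 32 * ∫⁻ s in Set.Ioc (0:ℝ) 1,
      ENNReal.ofReal (‖Complex.exp (Complex.I * (k * s : ℝ)) - 1‖ ^ 2 * s ^ (-1 - 2 * α)) := by
  rcases le_or_gt |k| 1 with hk | hk
  · refine le_trans ?_ le_self_add
    rw [ENNReal.ofReal_le_one]
    exact Real.rpow_le_one (abs_nonneg k) hk (by linarith)
  · refine le_trans ?_ le_add_self
    have k0 : 0 < |k| := by linarith
    have hsub : Set.Ioc (1 / (2 * |k|)) (1 / |k|) ⊆ Set.Ioc (0:ℝ) 1 := by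
      intro s hs
      refine ⟨lt_of_le_of_lt (by positivity) hs.1, hs.2.trans ?_⟩
      rw [div_le_one k0]; exact hk.le
    have hlow : ∀ s ∈ Set.Ioc (1 / (2 * |k|)) (1 / |k|), ENNReal.ofReal (1 / 16 * |k| ^ (1 + 2 * α))
        ≤ ENNReal.ofReal (‖Complex.exp (Complex.I * (k * s : ℝ)) - 1‖ ^ 2 * s ^ (-1 - 2 * α)) := by
      intro s hs
      have s0 : 0 < s := (hsub hs).1
      apply ENNReal.ofReal_le_ofReal
      have hθ1 : |k| * s ≤ 1 := by
        have := hs.2; rwa [le_div_iff₀ k0, mul_comm] at this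
      have hθ2 : 1 / 2 ≤ |k| * s := by
        have := hs.1.le
        rw [div_le_iff₀ (by positivity)] at this
        linarith
      have a1 : 1 / 4 ≤ ‖Complex.exp (Complex.I * (k * s : ℝ)) - 1‖ := by
        have him := Complex.abs_im_le_norm (Complex.exp (Complex.I * (k * s : ℝ)) - 1)
        have e : (Complex.exp (Complex.I * (k * s : ℝ)) - 1).im = Real.sin (k * s) := by
          rw [mul_comm, Complex.sub_im, Complex.exp_ofReal_mul_I_im]; simp
        rw [e] at him
        have e2 : |Real.sin (k * s)| = |Real.sin (|k| * s)| := by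
          rcases abs_cases k with ⟨h, -⟩ | ⟨h, -⟩ <;> rw [h]
          rw [neg_mul, Real.sin_neg, abs_neg]
        have h3 := Real.sin_gt_sub_cube (x := |k| * s) (by positivity)
        have h4 := le_abs_self (Real.sin (|k| * s))
        rw [e2] at him
        have h5 : (|k| * s) ^ 3 ≤ |k| * s := pow_le_of_le_one (by positivity) hθ1 (by norm_num)
        linarith
      have a2 : |k| ^ (1 + 2 * α) ≤ s ^ (-1 - 2 * α) := by
        have : s ^ (-1 - 2 * α) = (1 / s) ^ (1 + 2 * α) := by
          rw [one_div, Real.inv_rpow s0.le, ← Real.rpow_neg s0.le]; congr 1; ring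
        rw [this]
        refine Real.rpow_le_rpow k0.le ?_ (by linarith)
        rw [le_div_iff₀ s0]; exact hθ1
      have a3 : (1 / 16 : ℝ) ≤ ‖Complex.exp (Complex.I * (k * s : ℝ)) - 1‖ ^ 2 := by nlinarith
      exact mul_le_mul a3 a2 (by positivity) (by positivity)
    have hfin : ENNReal.ofReal (|k| ^ (2 * α)) = 32 * ∫⁻ s in Set.Ioc (1 / (2 * |k|)) (1 / |k|),
        ENNReal.ofReal (1 / 16 * |k| ^ (1 + 2 * α)) := by
      rw [setLIntegral_const, Real.volume_Ioc, ← ENNReal.ofReal_mul (by positivity)]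
      rw [show (32 : ENNReal) = ENNReal.ofReal 32 by simp, ← ENNReal.ofReal_mul (by norm_num)]
      congr 1
      rw [Real.rpow_add k0, Real.rpow_one]
      field_simp
      ring
    rw [hfin]
    refine mul_le_mul' le_rfl ?_
    refine (setLIntegral_mono' measurableSet_Ioc hlow).trans ?_
    exact lintegral_mono_set hsub

/-- The fractional Sobolev bound: `sup_s s⁻¹ ‖F(·+s) - F‖²` controls `‖|∂|^α F‖²` at high
frequency for `α < 1/2`. -/
lemma sobolev {α : ℝ} (hα : 0 ≤ α) (hα' : α < 1 / 2) (F : 𝓢(ℝ, ℂ)) {M : ℝ} (hM : 0 ≤ M)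
    (h1 : ∀ x, ‖F x‖ ^ 2 ≤ M / √(1 + |x|) ^ 3) (h2 : ∀ x, ‖deriv F x‖ ^ 2 ≤ M / √(1 + |x|)) :
    ∫ k : ℝ, ‖((|k| ^ α : ℝ) : ℂ) * FT F k‖ ^ 2 ≤ (16 + 8192 / (1 - 2 * α)) * M := by
  have hα2 : 0 < 1 - 2 * α := by linarith
  have hFc : Continuous (FT F) := by
    have : FT F = FTS F := by ext k; rw [FTS_apply]
    rw [this]; exact (FTS F).continuous
  have lint : ∀ K : 𝓢(ℝ, ℂ), ∫⁻ k, ENNReal.ofReal (‖K k‖ ^ 2) =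
      ENNReal.ofReal (∫ k, ‖K k‖ ^ 2) := fun K =>
    (ofReal_integral_eq_lintegral_ofReal ((memLp_two_iff_integrable_sq_norm
      K.continuous.aestronglyMeasurable).1 (K.memLp 2))
      (Filter.Eventually.of_forall fun x => by positivity)).symm
  rw [integral_eq_lintegral_of_nonneg_ae (Filter.Eventually.of_forall fun k => by positivity)
    (by
      have : Measurable fun k : ℝ => ‖((|k| ^ α : ℝ) : ℂ) * FT F k‖ ^ 2 := by
        have := hFc.measurable
        fun_prop
      exact this.aestronglyMeasurable)]
  refine ENNReal.toReal_le_of_le_ofReal (by positivity) ?_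
  have step : ∀ k : ℝ, ENNReal.ofReal (‖((|k| ^ α : ℝ) : ℂ) * FT F k‖ ^ 2) ≤
      ENNReal.ofReal (‖FT F k‖ ^ 2) + 32 * ∫⁻ s in Set.Ioc (0:ℝ) 1,
        ENNReal.ofReal (s ^ (-1 - 2 * α)) *
        ENNReal.ofReal (‖(Complex.exp (Complex.I * (k * s : ℝ)) - 1) * FT F k‖ ^ 2) := by
    intro k
    have e1 : ‖((|k| ^ α : ℝ) : ℂ) * FT F k‖ ^ 2 = |k| ^ (2 * α) * ‖FT F k‖ ^ 2 := by
      rw [norm_mul, mul_pow, Complex.norm_real, Real.norm_eq_abs, sq_abs,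
        ← Real.rpow_natCast (|k| ^ α), ← Real.rpow_mul (abs_nonneg k)]
      congr 2; push_cast; ring
    rw [e1, ENNReal.ofReal_mul (by positivity)]
    refine (mul_le_mul_left (kernel_lower hα k) _).trans ?_
    rw [add_mul, one_mul, mul_assoc]
    gcongr
    rw [← lintegral_mul_const' _ _ ENNReal.ofReal_ne_top]
    refine (setLIntegral_congr_fun measurableSet_Ioc fun s hs => ?_).le
    have s0 : 0 ≤ s ^ (-1 - 2 * α) := Real.rpow_nonneg hs.1.le _
    rw [← ENNReal.ofReal_mul (by positivity), ← ENNReal.ofReal_mul s0, norm_mul]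
    congr 1; ring
  refine (lintegral_mono step).trans ?_
  have meas : Measurable (Function.uncurry fun (k s : ℝ) => ENNReal.ofReal (s ^ (-1 - 2 * α)) *
        ENNReal.ofReal (‖(Complex.exp (Complex.I * (k * s : ℝ)) - 1) * FT F k‖ ^ 2)) := by
    have := hFc.measurable
    unfold Function.uncurry
    fun_prop
  rw [lintegral_add_left (by have := hFc.measurable; fun_prop), lintegral_const_mul' _ _ (by simp),
    lintegral_lintegral_swap meas.aemeasurable]
  have p1 : ∫⁻ k, ENNReal.ofReal (‖FT F k‖ ^ 2) ≤ ENNReal.ofReal (16 * M) := by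
    have := lint (FTS F)
    simp_rw [FTS_apply] at this
    rw [this, plancherel]
    exact ENNReal.ofReal_le_ofReal (sq_bound F hM h1)
  have p2 : ∀ s ∈ Set.Ioc (0:ℝ) 1, ∫⁻ k : ℝ, ENNReal.ofReal (s ^ (-1 - 2 * α)) *
        ENNReal.ofReal (‖(Complex.exp (Complex.I * (k * s : ℝ)) - 1) * FT F k‖ ^ 2) ≤
      ENNReal.ofReal (256 * M * s ^ (-2 * α)) := by
    intro s hs
    rw [lintegral_const_mul' _ _ ENNReal.ofReal_ne_top]
    have hint : Integrable fun k : ℝ =>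
        ‖(Complex.exp (Complex.I * (k * s : ℝ)) - 1) * FT F k‖ ^ 2 := by
      have h3 : MemLp (fun k : ℝ => (Complex.exp (Complex.I * (k * s : ℝ)) - 1) * FTS F k) 2 := by
        refine ((FTS F).memLp 2).of_le_mul (c := 2)
          (Continuous.aestronglyMeasurable (by have := (FTS F).continuous; fun_prop))
          (Filter.Eventually.of_forall fun k => ?_)
        rw [norm_mul]
        gcongr
        refine (norm_sub_le _ _).trans ?_
        rw [mul_comm, Complex.norm_exp_ofReal_mul_I]
        norm_num
      have := (memLp_two_iff_integrable_sq_norm h3.1).1 h3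
      simpa only [FTS_apply] using this
    rw [← ofReal_integral_eq_lintegral_ofReal hint
      (Filter.Eventually.of_forall fun k => by positivity), FT_shift,
      ← ENNReal.ofReal_mul (Real.rpow_nonneg hs.1.le _)]
    apply ENNReal.ofReal_le_ofReal
    refine (mul_le_mul_of_nonneg_left (incr_bound F hM h1 h2 hs.1 hs.2)
      (Real.rpow_nonneg hs.1.le _)).trans_eq ?_
    have : s ^ (-2 * α) = s ^ (-1 - 2 * α) * s := by
      rw [← Real.rpow_add_one hs.1.ne']; congr 1; ring
    rw [this]; ring
  have p3 : ∫⁻ s in Set.Ioc (0:ℝ) 1, ENNReal.ofReal (256 * M * s ^ (-2 * α)) =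
      ENNReal.ofReal (256 * M / (1 - 2 * α)) := by
    have hI : IntervalIntegrable (fun s : ℝ => s ^ (-2 * α)) volume 0 1 :=
      intervalIntegral.intervalIntegrable_rpow' (by linarith)
    rw [intervalIntegrable_iff_integrableOn_Ioc_of_le zero_le_one] at hI
    rw [← ofReal_integral_eq_lintegral_ofReal (hI.const_mul _)]
    · rw [integral_const_mul, ← intervalIntegral.integral_of_le zero_le_one,
        integral_rpow (Or.inl (by linarith))]
      congr 1
      rw [Real.one_rpow, Real.zero_rpow (by linarith), show -2 * α + 1 = 1 - 2 * α by ring]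
      ring
    · refine (ae_restrict_iff' measurableSet_Ioc).2 (Filter.Eventually.of_forall fun s hs => ?_)
      have := Real.rpow_nonneg hs.1.le (-2 * α)
      simp only [Pi.zero_apply]
      positivity
  have p4 := (setLIntegral_mono' measurableSet_Ioc p2).trans_eq p3
  refine (add_le_add p1 (mul_le_mul_right p4 32)).trans ?_
  rw [show (32 : ENNReal) = ENNReal.ofReal 32 by simp, ← ENNReal.ofReal_mul (by norm_num),
    ← ENNReal.ofReal_add (by positivity) (by positivity)]
  apply ENNReal.ofReal_le_ofReal
  apply le_of_eq; field_simp; ring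

/-! ### Scaling and conclusion -/

/-- The cube of a Schwartz function, as a Schwartz function. -/
def cube (U : 𝓢(ℝ, ℂ)) : 𝓢(ℝ, ℂ) :=
  SchwartzMap.smulLeftCLM ℂ U (SchwartzMap.smulLeftCLM ℂ U U)

lemma cube_apply (U : 𝓢(ℝ, ℂ)) (x : ℝ) : cube U x = U x ^ 3 := by
  rw [cube, SchwartzMap.smulLeftCLM_apply_apply U.hasTemperateGrowth,
    SchwartzMap.smulLeftCLM_apply_apply U.hasTemperateGrowth, smul_eq_mul, smul_eq_mul]
  ring

lemma deriv_cube (U : 𝓢(ℝ, ℂ)) (x : ℝ) : deriv (cube U) x = 3 * U x ^ 2 * deriv U x := by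
  have e : (cube U : ℝ → ℂ) = fun x => U x ^ 3 := by ext x; rw [cube_apply]
  rw [e]
  have := (U.differentiableAt (x := x)).hasDerivAt.pow 3
  rw [show (fun x => U x ^ 3) = (U : ℝ → ℂ) ^ 3 from rfl, this.deriv]
  norm_num

lemma cube_bounds (H : 𝓢(ℝ, ℂ)) {ε : ℝ} (hε : 0 ≤ ε) (hH : ∀ ξ, ‖H ξ‖ ≤ ε)
    (hH' : ∫ ξ, ‖deriv H ξ‖ ^ 2 ≤ ε ^ 2) (x : ℝ) :
    ‖cube (osc H) x‖ ^ 2 ≤ (1010 ^ 7 * ε ^ 6) / √(1 + |x|) ^ 3 ∧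
    ‖deriv (cube (osc H)) x‖ ^ 2 ≤ (1010 ^ 7 * ε ^ 6) / √(1 + |x|) := by
  have hb1 : 1 ≤ √(1 + |x|) := Real.one_le_sqrt.2 (by linarith [abs_nonneg x])
  have hb2 : √(1 + |x|) ^ 2 = 1 + |x| := Real.sq_sqrt (by positivity)
  have hr1 : 1 ≤ √√(1 + |x|) := Real.one_le_sqrt.2 hb1
  have hr2 : √√(1 + |x|) ^ 2 = √(1 + |x|) := Real.sq_sqrt (by positivity)
  rw [← hr2]
  set r := √√(1 + |x|)
  have hr4 : r ^ 4 = 1 + |x| := by rw [← hb2, ← hr2]; ring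
  have r0 : 0 < r := by linarith
  have k1 := osc_le H hε hH hH' hr1 hr4
  have k2 := deriv_osc_le H hε hH hH' hr1 hr4
  have ε6 : 0 ≤ ε ^ 6 := by positivity
  constructor
  · rw [cube_apply, norm_pow]
    calc (‖osc H x‖ ^ 3) ^ 2 ≤ ((410 * ε / r) ^ 3) ^ 2 := by gcongr
      _ = (410 ^ 6 * ε ^ 6) / (r ^ 2) ^ 3 := by field_simp
      _ ≤ _ := by gcongr; norm_num
  · rw [deriv_cube, norm_mul, norm_mul, norm_pow]
    calc (‖(3 : ℂ)‖ * ‖osc H x‖ ^ 2 * ‖deriv (osc H) x‖) ^ 2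
        ≤ (3 * (410 * ε / r) ^ 2 * (1010 * ε * r)) ^ 2 := by
          gcongr; simp
      _ = (9 * 410 ^ 4 * 1010 ^ 2 * ε ^ 6) / r ^ 2 := by field_simp; ring
      _ ≤ _ := by gcongr; norm_num

/-- The rescaled profile `H(η) = ĝ(l η)` keeps the sup bound on `ĝ`. -/
lemma profile_sup (g : 𝓢(ℝ, ℂ)) {l : ℝ} (hl : l ≠ 0) (η : ℝ) :
    ‖dil l hl (FTS g) η‖ ≤ LinfNorm (FT g) := by
  rw [dil_apply, FTS_apply]
  refine le_ciSup (f := fun ξ => ‖FT g ξ‖) ?_ (l * η)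
  obtain ⟨C, hC⟩ := (FTS g).decay 0 0
  refine ⟨C, ?_⟩
  rintro _ ⟨ξ, rfl⟩
  have := hC.2 ξ
  simpa [FTS_apply] using this

lemma profile_deriv (g : 𝓢(ℝ, ℂ)) {l : ℝ} (hl : 0 < l) :
    ∫ η, ‖deriv (dil l hl.ne' (FTS g)) η‖ ^ 2 = l * ∫ x : ℝ, ‖(x : ℂ) * g x‖ ^ 2 := by
  have h : ∀ η, deriv (dil l hl.ne' (FTS g)) η = (l : ℂ) * deriv (FTS g) (l * η) := by
    intro η
    have e : (dil l hl.ne' (FTS g) : ℝ → ℂ) = fun x => FTS g (l * x) := by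
      ext x; rw [dil_apply]
    rw [e, deriv_comp_mul_left, Complex.real_smul]
  simp_rw [h, norm_mul, mul_pow]
  rw [integral_const_mul, Measure.integral_comp_mul_left (fun η => ‖deriv (FTS g) η‖ ^ 2),
    deriv_FTS, Complex.norm_real, Real.norm_eq_abs, sq_abs, abs_of_pos (by positivity), smul_eq_mul]
  simp_rw [norm_mul]
  field_simp

lemma uAiry_scale (g : 𝓢(ℝ, ℂ)) {l t : ℝ} (hl : 0 < l) (ht : t * l ^ 3 = 1) (x : ℝ) :
    uAiry g t x = (√(2 * π) : ℂ)⁻¹ * l * osc (dil l hl.ne' (FTS g)) (l * x) := by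
  rw [uAiry, mul_assoc, osc_apply]
  congr 1
  have := Measure.integral_comp_mul_left
    (fun ξ : ℝ => Complex.exp (Complex.I * (x * ξ + t * ξ ^ 3)) * FT g ξ) l
  rw [abs_of_pos (by positivity), Complex.real_smul] at this
  have h2 : (l : ℂ) ≠ 0 := by exact_mod_cast hl.ne'
  have h3 : (t : ℂ) * l ^ 3 = 1 := by exact_mod_cast ht
  rw [← mul_right_inj' (inv_ne_zero h2), inv_mul_cancel_left₀ h2, ← Complex.ofReal_inv, ← this]
  congr 1; ext η
  rw [dil_apply, FTS_apply]
  congr 2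
  push_cast
  linear_combination (Complex.I * η ^ 3) * h3

lemma FT_scale (F : ℝ → ℂ) (A : ℂ) {l : ℝ} (hl : 0 < l) (ξ : ℝ) :
    FT (fun x => A * F (l * x)) ξ = A * (l : ℂ)⁻¹ * FT F (l⁻¹ * ξ) := by
  have := Measure.integral_comp_mul_left
    (fun x : ℝ => Complex.exp (-(Complex.I * x * (l⁻¹ * ξ : ℝ))) * F x) l
  rw [abs_of_pos (by positivity), Complex.real_smul, Complex.ofReal_inv] at this
  rw [FT, FT, mul_left_comm, mul_assoc A, ← this, ← integral_const_mul A]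
  congr 2; ext x
  have h2 : (l : ℂ) ≠ 0 := by exact_mod_cast hl.ne'
  rw [mul_left_comm]
  congr 3
  push_cast
  field_simp

lemma L2_scale (G : ℝ → ℂ) (A : ℂ) (α : ℝ) {l : ℝ} (hl : 0 < l) :
    ∫ ξ : ℝ, ‖((|ξ| ^ α : ℝ) : ℂ) * (A * G (l⁻¹ * ξ))‖ ^ 2 =
      ‖A‖ ^ 2 * (l ^ α) ^ 2 * l * ∫ ξ : ℝ, ‖((|ξ| ^ α : ℝ) : ℂ) * G ξ‖ ^ 2 := by
  have h : ∀ ξ : ℝ, ‖((|ξ| ^ α : ℝ) : ℂ) * (A * G (l⁻¹ * ξ))‖ ^ 2 =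
      (‖A‖ ^ 2 * (l ^ α) ^ 2) * ‖((|l⁻¹ * ξ| ^ α : ℝ) : ℂ) * G (l⁻¹ * ξ)‖ ^ 2 := by
    intro ξ
    have : |ξ| ^ α = l ^ α * |l⁻¹ * ξ| ^ α := by
      rw [← Real.mul_rpow hl.le (abs_nonneg _), abs_mul, abs_of_pos (inv_pos.2 hl),
        mul_inv_cancel_left₀ hl.ne']
    rw [this, norm_mul, norm_mul, norm_mul, Complex.norm_real, Complex.norm_real, norm_mul,
      Real.norm_of_nonneg (Real.rpow_nonneg hl.le α)]
    ring
  simp_rw [h]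
  rw [integral_const_mul,
    Measure.integral_comp_mul_left (fun ξ => ‖((|ξ| ^ α : ℝ) : ℂ) * G ξ‖ ^ 2), inv_inv,
    abs_of_pos hl, smul_eq_mul]
  ring

/-- Lemma 2.3 (trilinear estimate): `‖|∂ₓ|^α (u(t)³)‖_{L²} ≤ C ε₁³ t^{-5/6-α/3}`.
The L² norm of `|∂ₓ|^α (u³)` is expressed on the Fourier side (Plancherel). -/
theorem airy_trilinear (α : ℝ) (hα : α ∈ Set.Ico (0:ℝ) (1/2)) :
    ∃ C : ℝ, 0 < C ∧
      ∀ (ε₁ : ℝ) (f : ℝ → SchwartzMap ℝ ℂ),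
        (∀ t : ℝ, 1 ≤ t →
            t ^ (-(1:ℝ)/6) * L2norm (fun x => (x : ℂ) * f t x) + LinfNorm (FT ⇑(f t)) ≤ ε₁) →
        ∀ t : ℝ, 1 ≤ t →
          L2norm (fun ξ => ((|ξ| ^ α : ℝ) : ℂ) * FT (fun x => (uAiry (⇑(f t)) t x) ^ 3) ξ) ≤
            C * ε₁ ^ 3 * t ^ (-(5:ℝ)/6 - α/3) := by
  obtain ⟨hα0, hα1⟩ := hα
  have hα2 : 0 < 1 - 2 * α := by linarith
  refine ⟨√((16 + 8192 / (1 - 2 * α)) * 1010 ^ 7), by positivity, fun ε f hf t ht => ?_⟩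
  have t0 : 0 < t := by linarith
  have hft := hf t ht
  set g := f t
  have hI0 : 0 ≤ LinfNorm (FT g) := Real.iSup_nonneg fun x => norm_nonneg _
  have hL0 : 0 ≤ L2norm (fun x => (x : ℂ) * g x) := Real.sqrt_nonneg _
  have ht6 : 0 < t ^ (-(1:ℝ)/6) := Real.rpow_pos_of_pos t0 _
  have hε : 0 ≤ ε := le_trans (by positivity) hft
  have hl : 0 < t ^ (-(1:ℝ)/3) := Real.rpow_pos_of_pos t0 _
  -- `l = t^{-1/3}` rescales the evolution at time `t` to time one
  set l := t ^ (-(1:ℝ)/3) with hldef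
  have hlt : t * l ^ 3 = 1 := by
    rw [hldef, ← Real.rpow_natCast, ← Real.rpow_mul t0.le]
    norm_num
    rw [Real.rpow_neg_one, mul_inv_cancel₀ t0.ne']
  have hl6 : l = (t ^ (-(1:ℝ)/6)) ^ 2 := by
    rw [hldef, ← Real.rpow_natCast, ← Real.rpow_mul t0.le]; norm_num
  set H := dil l hl.ne' (FTS g) with hHdef
  have hH : ∀ ξ, ‖H ξ‖ ≤ ε := fun ξ =>
    (profile_sup g hl.ne' ξ).trans (by nlinarith [mul_nonneg ht6.le hL0])
  have hH' : ∫ ξ, ‖deriv H ξ‖ ^ 2 ≤ ε ^ 2 := by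
    rw [hHdef, profile_deriv g hl]
    have : ∫ x : ℝ, ‖(x : ℂ) * g x‖ ^ 2 = L2norm (fun x => (x : ℂ) * g x) ^ 2 := by
      rw [L2norm, Real.sq_sqrt (integral_nonneg fun x => by positivity)]
    rw [this, hl6, ← mul_pow]
    gcongr
    linarith
  have key := sobolev hα0 hα1 (cube (osc H)) (M := 1010 ^ 7 * ε ^ 6) (by positivity)
    (fun x => (cube_bounds H hε hH hH' x).1) (fun x => (cube_bounds H hε hH hH' x).2)
  set c : ℂ := (√(2 * π) : ℂ)⁻¹ with hc
  have hcn : ‖c‖ ≤ 1 := by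
    rw [hc, norm_inv, Complex.norm_real, Real.norm_of_nonneg (Real.sqrt_nonneg _)]
    exact inv_le_one_of_one_le₀ (Real.one_le_sqrt.2 (by linarith [Real.pi_gt_three]))
  have hu : (fun x => uAiry g t x ^ 3) = fun x => (c * l) ^ 3 * cube (osc H) (l * x) := by
    ext x; rw [uAiry_scale g hl hlt, cube_apply, mul_pow]
  clear_value c
  rw [hu]
  simp_rw [FT_scale _ _ hl]
  rw [L2norm, L2_scale _ _ _ hl, Real.sqrt_le_iff]
  have htp : 0 < t ^ (-(5:ℝ)/6 - α/3) := Real.rpow_pos_of_pos t0 _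
  refine ⟨by positivity, ?_⟩
  -- the powers of `l` combine: `(l³ l⁻¹ l^α l^{1/2})² = t^{2(-5/6-α/3)}`
  have hpow : (t ^ (-(5:ℝ)/6 - α/3)) ^ 2 = (l ^ 2) ^ 2 * (l ^ α) ^ 2 * l := by
    rw [hldef, ← Real.rpow_mul t0.le]
    simp only [← Real.rpow_natCast, ← Real.rpow_mul t0.le]
    rw [← Real.rpow_add t0, ← Real.rpow_add t0]
    congr 1; push_cast; ring
  have hA : ‖(c * l) ^ 3 * (l : ℂ)⁻¹‖ ≤ l ^ 2 := by
    rw [norm_mul, norm_pow, norm_mul, norm_inv, Complex.norm_real, Real.norm_of_nonneg hl.le]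
    calc (‖c‖ * l) ^ 3 * l⁻¹ ≤ (1 * l) ^ 3 * l⁻¹ := by gcongr
      _ = l ^ 2 := by field_simp
  have hla : 0 ≤ l ^ α := Real.rpow_nonneg hl.le _
  calc _ ≤ (l ^ 2) ^ 2 * (l ^ α) ^ 2 * l * ((16 + 8192 / (1 - 2 * α)) * (1010 ^ 7 * ε ^ 6)) := by
        gcongr
    _ = _ := by
        rw [mul_pow, mul_pow, hpow, Real.sq_sqrt (by positivity)]
        ring
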